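/- (Schur complement with redundant points, eq. Q21_3.) If K_11 is invertible, then K_22 − K_21·K_11⁻¹·K_12 = fromBlocks z 0 0 0, i.e., the Schur complement is the block matrix on y2⊕r whose (y2,y2) block is z and whose other three blocks vanish. -/

import Mathlib

open Matrix

/-- Schur complement with redundant points (eq. Q21_3): if `K_11` is invertible, then
`K_22 − K_21·K_11⁻¹·K_12 = fromBlocks z 0 0 0`, with `z := J_22 − L_12ᵀ·K_11⁻¹·L_12`. -/
theorem schur_complement_redundant_points
    {y1 y2 r : Type*} [Fintype y1] [Fintype y2] [Fintype r]
    [DecidableEq y1] [DecidableEq y2] [DecidableEq r]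
    [Nonempty y1] [Nonempty y2] [Nonempty r]
    (J11 : Matrix y1 y1 ℝ) (J1r : Matrix y1 r ℝ) (Jrr : Matrix r r ℝ)
    (J12 : Matrix y1 y2 ℝ) (Jr2 : Matrix r y2 ℝ) (J22 : Matrix y2 y2 ℝ)
    (hJrr : Jrrᵀ = Jrr)
    (hK11 : IsUnit (fromBlocks J11 J1r J1rᵀ Jrr)) :
    fromBlocks J22 Jr2ᵀ Jr2 Jrr
      - (fromBlocks J12 J1r Jr2 Jrr)ᵀ * (fromBlocks J11 J1r J1rᵀ Jrr)⁻¹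
        * fromBlocks J12 J1r Jr2 Jrr
      = fromBlocks
          (J22 - (fromRows J12 Jr2)ᵀ * (fromBlocks J11 J1r J1rᵀ Jrr)⁻¹ * fromRows J12 Jr2)
          0 0 0 := by
  have hdet := (Matrix.isUnit_iff_isUnit_det _).mp hK11
  have hC : fromRows J1r Jrr
      = fromBlocks J11 J1r J1rᵀ Jrr * fromRows (0 : Matrix y1 r ℝ) (1 : Matrix r r ℝ) := by
    rw [fromBlocks_mul_fromRows]; simp
  have hCt : (fromRows J1r Jrr)ᵀ
      = fromCols (0 : Matrix r y1 ℝ) (1 : Matrix r r ℝ) * fromBlocks J11 J1r J1rᵀ Jrr := by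
    rw [fromCols_mul_fromBlocks, transpose_fromRows, hJrr]; simp
  have hK : fromBlocks J12 J1r Jr2 Jrr = fromCols (fromRows J12 Jr2) (fromRows J1r Jrr) := by
    ext (i | i) (j | j) <;> rfl
  have h1 : (fromBlocks J11 J1r J1rᵀ Jrr)⁻¹ * fromRows J1r Jrr
      = fromRows (0 : Matrix y1 r ℝ) (1 : Matrix r r ℝ) := by
    rw [hC, Matrix.nonsing_inv_mul_cancel_left _ _ hdet]
  have h2 : (fromRows J1r Jrr)ᵀ * (fromBlocks J11 J1r J1rᵀ Jrr)⁻¹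
      = fromCols (0 : Matrix r y1 ℝ) (1 : Matrix r r ℝ) := by
    rw [hCt, Matrix.mul_nonsing_inv_cancel_right _ _ hdet]
  have e12 : (fromRows J12 Jr2)ᵀ * (fromBlocks J11 J1r J1rᵀ Jrr)⁻¹ * fromRows J1r Jrr
      = Jr2ᵀ := by
    rw [Matrix.mul_assoc, h1, transpose_fromRows, fromCols_mul_fromRows]; simp
  have e21 : (fromRows J1r Jrr)ᵀ * (fromBlocks J11 J1r J1rᵀ Jrr)⁻¹ * fromRows J12 Jr2
      = Jr2 := by
    rw [h2, fromCols_mul_fromRows]; simp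
  have e22 : (fromRows J1r Jrr)ᵀ * (fromBlocks J11 J1r J1rᵀ Jrr)⁻¹ * fromRows J1r Jrr
      = Jrr := by
    rw [h2, fromCols_mul_fromRows]; simp
  rw [hK, transpose_fromCols, fromRows_mul, fromRows_mul_fromCols, e12, e21, e22, sub_eq_add_neg,
    fromBlocks_neg, fromBlocks_add]
  simp [sub_eq_add_neg]
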